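/- arXiv:1509.08053 — 2 statements merged into one kernel-verified Lean document; each statement's English description precedes it below -/
import Mathlib

section
/- Let F_q be a finite field, 1 ≤ k < n, A ∈ M_k(F_q) and C ∈ M_{n−k,k}(F_q). There exist B ∈ M_{k,n−k}(F_q) and D ∈ M_{n−k}(F_q) such that the block matrix [A B; C D] ∈ M_n(F_q) has irreducible characteristic polynomial if and only if the n × k polynomial matrix [xI_k − A; −C] (with top block xI_k − A and bottom block −C) is unimodular over F_q[x]. -/
/-- An `m × k` polynomial matrix (with `#m ≥ k`) is *unimodular* if every common divisor
of its `k × k` minors is a unit (equivalently, all its invariant factors equal `1`). -/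
def Matrix.Unimodular {F : Type*} [Field F] {m : Type*} [Fintype m] [DecidableEq m] {k : ℕ}
    (M : Matrix m (Fin k) (Polynomial F)) : Prop :=
  ∀ g : Polynomial F,
    (∀ f : Fin k → m, Function.Injective f → g ∣ (M.submatrix f id).det) → IsUnit g

/-- The `(k + r) × k` polynomial matrix `[xI_k − A; −C]`. -/
noncomputable def xIminusAC {F : Type*} [Field F] {k r : ℕ} (A : Matrix (Fin k) (Fin k) F)
    (C : Matrix (Fin r) (Fin k) F) : Matrix (Fin k ⊕ Fin r) (Fin k) (Polynomial F) :=
  Matrix.of fun i j =>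
    Sum.elim (fun i' => (if i' = j then Polynomial.X else 0) - Polynomial.C (A i' j))
      (fun i'' => - Polynomial.C (C i'' j)) i

/-
Write `M = [xI − A; −C]`. If `g` divides all the `k × k` minors of `M`, it divides `det (xI − A)`,
of degree `k`, and, by Laplace expansion, the characteristic polynomial of every completion, of
degree `n > k`; if the latter is irreducible, `g` is a unit.

Conversely, let `α` generate the extension `L` of degree `n` of `F`. A row `z ∈ Lⁿ` with
`z * M(α) = 0` and entries linearly independent over `F` is an `F`-basis of `L` in which
multiplication by `α` has the matrix `[A B; C D]` for some `B` and `D`, so that its characteristic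
polynomial is the minimal polynomial of `α`. Such a `z` exists unless the proper `L`-subspaces
`{z | z ⬝ c = 0}` of the left kernel of `M(α)`, one for each nonzero `c ∈ Fⁿ`, cover it, and these
are too few: there are at most `|L| - 1` of them.

They are proper because `M(α) v = c` with `c ∈ Fⁿ` forces `c = 0`. Indeed, Cramer's rule for the top
block gives a polynomial vector `s` of degree `< k` with `M(α) s(α) = χ_A(α) c`. Both sides are
values at `α` of polynomials of degree `≤ k < n`, so `M s = χ_A c`. Unimodularity of `M` then yields
`χ_A ∣ s`, and comparing degrees, `s = 0`.
-/

open Polynomial Matrix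

section Minors

variable {R m : Type*} [CommRing R] {g : R} {k : ℕ}

lemma dvd_minors_succ_of_dvd_minors (N : Matrix m (Fin (k + 1)) R)
    (hN : ∀ f : Fin k → m, Function.Injective f → g ∣ (N.submatrix f Fin.castSucc).det)
    {f : Fin (k + 1) → m} (hf : Function.Injective f) : g ∣ (N.submatrix f id).det := by
  rw [det_succ_column _ (Fin.last k)]
  refine Finset.dvd_sum fun i _ => Dvd.dvd.mul_left ?_ _
  rw [submatrix_submatrix, Fin.succAbove_last]
  exact hN _ (hf.comp Fin.succAbove_right_injective)

lemma dvd_minors_add_of_dvd_minors {r : ℕ} (N : Matrix m (Fin (k + r)) R)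
    (hN : ∀ f : Fin k → m, Function.Injective f → g ∣ (N.submatrix f (Fin.castAdd r)).det)
    {f : Fin (k + r) → m} (hf : Function.Injective f) : g ∣ (N.submatrix f id).det := by
  induction r with
  | zero => exact hN f hf
  | succ r ih =>
    exact dvd_minors_succ_of_dvd_minors N
      (fun f' hf' => ih (N.submatrix id Fin.castSucc) hN hf') hf

lemma dvd_det_mul_of_dvd_mulVec {n : Type*} [Fintype n] [DecidableEq n] (N : Matrix n n R)
    {s : n → R} (hs : ∀ i, g ∣ (N *ᵥ s) i) (j : n) : g ∣ N.det * s j := by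
  have cramer : N.adjugate *ᵥ (N *ᵥ s) = N.det • s := by
    rw [mulVec_mulVec, adjugate_mul, smul_mulVec, one_mulVec]
  rw [← smul_eq_mul, ← Pi.smul_apply, ← cramer]
  exact Finset.dvd_sum fun i _ => (hs i).mul_left _

end Minors

section Unimodular

variable {F m : Type*} [Field F] [Fintype m] [DecidableEq m] {k : ℕ} {M : Matrix m (Fin k) F[X]}

lemma dvd_of_unimodular_of_dvd_minor_mul (hM : M.Unimodular) {d a : F[X]}
    (h : ∀ f : Fin k → m, Function.Injective f → d ∣ (M.submatrix f id).det * a) : d ∣ a := by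
  let I : Ideal F[X] := (Ideal.span {d}).colon {a}
  have mem_I (b : F[X]) : b ∈ I ↔ d ∣ b * a := by
    rw [Submodule.mem_colon_singleton, smul_eq_mul, Ideal.mem_span_singleton]
  have isUnit_generator : IsUnit (Submodule.IsPrincipal.generator I) := hM _ fun f hf =>
    (Submodule.IsPrincipal.mem_iff_generator_dvd I).mp ((mem_I _).mpr (h f hf))
  have one_mem : (1 : F[X]) ∈ I :=
    (Submodule.IsPrincipal.mem_iff_generator_dvd I).mpr isUnit_generator.dvd
  simpa only [one_mul] using (mem_I 1).mp one_mem

lemma dvd_of_unimodular_of_dvd_mulVec (hM : M.Unimodular) {d : F[X]} {s : Fin k → F[X]}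
    (hs : ∀ i, d ∣ (M *ᵥ s) i) (j : Fin k) : d ∣ s j :=
  dvd_of_unimodular_of_dvd_minor_mul hM fun f _ =>
    dvd_det_mul_of_dvd_mulVec (M.submatrix f id) (fun i => hs (f i)) j

end Unimodular

lemma charmatrix_mulVec {R n : Type*} [CommRing R] [Fintype n] [DecidableEq n]
    (A : Matrix n n R) (s : n → R[X]) : A.charmatrix *ᵥ s = (X : R[X]) • s - A.map C *ᵥ s := by
  rw [charmatrix, sub_mulVec, scalar_apply, RingHom.mapMatrix_apply]
  congr 1
  exact funext fun i => mulVec_diagonal _ _ i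

lemma degree_map_C_mulVec_le {R m n : Type*} [Semiring R] [Fintype n] (A : Matrix m n R)
    {s : n → R[X]} {d : WithBot ℕ} (hs : ∀ j, (s j).degree ≤ d) (i : m) :
    ((A.map C *ᵥ s) i).degree ≤ d := by
  refine (degree_sum_le _ _).trans (Finset.sup_le fun j _ => ?_)
  change (C (A i j) * s j).degree ≤ d
  rw [C_mul']
  exact (degree_smul_le _ _).trans (hs j)

lemma degree_lt_of_degree_charmatrix_mulVec_le {R n : Type*} [CommRing R] [Fintype n]
    [DecidableEq n] (A : Matrix n n R) {s : n → R[X]} {d : ℕ}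
    (hs : ∀ i, ((A.charmatrix *ᵥ s) i).degree ≤ d) (j : n) : (s j).degree < d := by
  have : Nonempty n := ⟨j⟩
  nontriviality R
  obtain ⟨i, hi⟩ := Finite.exists_max fun j => (s j).degree
  refine (hi j).trans_lt (lt_of_not_ge fun hd => ?_)
  have X_mul_eq : s i * X = (A.charmatrix *ᵥ s) i + (A.map C *ᵥ s) i := by
    rw [charmatrix_mulVec, Pi.sub_apply, sub_add_cancel, Pi.smul_apply, smul_eq_mul, mul_comm]
  have degree_succ_le : (s i).degree + 1 ≤ (s i).degree := by
    rw [← degree_mul_X, X_mul_eq]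
    exact (degree_add_le _ _).trans (max_le ((hs i).trans hd) (degree_map_C_mulVec_le A hi i))
  have ne_zero : s i ≠ 0 := by
    intro h
    simp [h] at hd
  rw [degree_eq_natDegree ne_zero] at degree_succ_le
  norm_cast at degree_succ_le
  omega

lemma exists_charmatrix_mulVec_eq_charpoly_smul {R L n : Type*} [CommRing R] [CommRing L]
    [Algebra R L] [Fintype n] [DecidableEq n] (A : Matrix n n R) {α : L} {v : n → L} {c : n → R}
    (h : A.charmatrix.map (aeval α) *ᵥ v = algebraMap R L ∘ c) :
    ∃ s : n → R[X], A.charmatrix *ᵥ s = A.charpoly • (C ∘ c) ∧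
      aeval α ∘ s = aeval α A.charpoly • v := by
  let φ : R[X] →+* L := (aeval α : R[X] →ₐ[R] L)
  have map_C : φ ∘ C ∘ c = φ.mapMatrix A.charmatrix *ᵥ v :=
    (funext fun j => aeval_C α (c j)).trans h.symm
  refine ⟨A.charmatrix.adjugate *ᵥ (C ∘ c), ?_, ?_⟩
  · rw [mulVec_mulVec, mul_adjugate, smul_mulVec, one_mulVec, charpoly]
  · calc φ ∘ (A.charmatrix.adjugate *ᵥ (C ∘ c))
        = φ.mapMatrix A.charmatrix.adjugate *ᵥ (φ ∘ C ∘ c) :=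
          funext fun j => φ.map_mulVec _ _ j
      _ = φ A.charpoly • v := by
          rw [map_C, φ.map_adjugate, mulVec_mulVec, adjugate_mul, ← φ.map_det, smul_mulVec,
            one_mulVec, charpoly]

lemma eq_zero_of_aeval_eq_zero_of_degree_le {F L : Type*} [Field F] [Ring L] [Algebra F L]
    {α : L} {d : ℕ} (hα : d < (minpoly F α).natDegree) {p : F[X]} (hp : aeval α p = 0)
    (hdeg : p.degree ≤ d) : p = 0 := by
  by_contra p_ne_zero
  have := natDegree_le_natDegree (minpoly.degree_le_of_ne_zero F α p_ne_zero hp)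
  have := natDegree_le_of_degree_le hdeg
  omega

lemma exists_vecMul_eq_zero_dotProduct_ne_zero {K m n : Type*} [Field K] [Fintype m] [Fintype n]
    {M : Matrix m n K} {b : m → K} (hb : ∀ v, M *ᵥ v ≠ b) :
    ∃ z : m → K, z ᵥ* M = 0 ∧ z ⬝ᵥ b ≠ 0 := by
  classical
  have b_notMem : b ∉ M.mulVecLin.range := fun ⟨v, hv⟩ => hb v hv
  obtain ⟨f, f_b, f_range⟩ := Submodule.exists_le_ker_of_notMem b_notMem
  obtain ⟨z, rfl⟩ := (dotProductEquiv K m).surjective f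
  refine ⟨z, dotProduct_eq_zero _ fun v => ?_, f_b⟩
  rw [← dotProduct_mulVec]
  exact f_range ⟨v, rfl⟩

open scoped Pointwise in
lemma exists_forall_notMem_of_card_lt {K V ι : Type*} [DivisionRing K] [AddCommGroup V]
    [Module K V] [Finite ι] {p : ι → Submodule K V} (hp : ∀ i, p i ≠ ⊤)
    (hcard : Nat.card ι < Nat.card K) : ∃ v, ∀ i, v ∉ p i := by
  have := Fintype.ofFinite ι
  by_contra! hcover
  have cover : ⋃ i ∈ Finset.univ, (0 : V) +ᵥ ((p i).toAddSubgroup : Set V) = Set.univ := by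
    simpa [Set.iUnion_eq_univ_iff] using hcover
  obtain ⟨i, -, hfin, hindex⟩ := AddSubgroup.exists_index_le_card_of_leftCoset_cover cover
  have : Finite (V ⧸ p i) := AddSubgroup.finite_quotient_of_finiteIndex (H := (p i).toAddSubgroup)
  have : Nontrivial (V ⧸ p i) := Submodule.Quotient.nontrivial_iff.mpr (hp i)
  obtain ⟨x, hx⟩ := exists_ne (0 : V ⧸ p i)
  have card_le_index : Nat.card K ≤ (p i).toAddSubgroup.index :=
    Nat.card_le_card_of_injective (fun a => (a • x : V ⧸ p i)) (smul_left_injective K hx)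
  rw [Finset.card_univ, ← Nat.card_eq_fintype_card] at hindex
  omega

lemma exists_mem_linearIndependent_of_card_le {F L ι : Type*} [CommRing F] [Finite F] [Field L]
    [Algebra F L] [Fintype ι] (hcard : Nat.card (ι → F) ≤ Nat.card L) (K : Submodule L (ι → L))
    (hK : ∀ c : ι → F, c ≠ 0 → ∃ z ∈ K, z ⬝ᵥ (algebraMap F L ∘ c) ≠ 0) :
    ∃ z ∈ K, LinearIndependent F z := by
  let functional (c : ι → F) : K →ₗ[L] L :=
    (dotProductBilin L L).flip (algebraMap F L ∘ c) ∘ₗ K.subtype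
  have functional_ker_ne_top (c : {c : ι → F // c ≠ 0}) : (functional c).ker ≠ ⊤ := by
    obtain ⟨z, hz, hzc⟩ := hK c c.2
    exact fun h => hzc (h.ge (Submodule.mem_top (x := ⟨z, hz⟩)))
  obtain ⟨⟨z, hz⟩, z_avoids⟩ := exists_forall_notMem_of_card_lt functional_ker_ne_top
    ((Finite.card_subtype_lt (x := 0) (by simp)).trans_le hcard)
  refine ⟨z, hz, Fintype.linearIndependent_iff.mpr fun c hc => congrFun ?_⟩
  by_contra c_ne_zero
  refine z_avoids ⟨c, c_ne_zero⟩ ?_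
  simpa [functional, dotProduct, Algebra.smul_def, mul_comm] using hc

lemma charpoly_leftMulMatrix_eq_minpoly {R S ι : Type*} [CommRing R] [Ring S] [Algebra R S]
    [Fintype ι] [DecidableEq ι] (b : Module.Basis ι R S) (pb : PowerBasis R S) :
    (Algebra.leftMulMatrix b pb.gen).charpoly = minpoly R pb.gen := by
  have := Module.Free.of_basis b
  have := Module.Finite.of_basis b
  rw [← charpoly_leftMulMatrix pb]
  simp only [Algebra.leftMulMatrix_apply, LinearMap.charpoly_toMatrix]

section Pencil

variable {F : Type*} [Field F] {k r : ℕ} {A : Matrix (Fin k) (Fin k) F}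
  {C : Matrix (Fin r) (Fin k) F}

lemma xIminusAC_eq_fromRows (A : Matrix (Fin k) (Fin k) F) (C : Matrix (Fin r) (Fin k) F) :
    xIminusAC A C = fromRows A.charmatrix ((-C).map Polynomial.C) := by
  ext1 (i | i) j <;> simp [xIminusAC, charmatrix_apply, diagonal_apply]

lemma dvd_charpoly_fromBlocks_of_dvd_minors {g : F[X]}
    (hg : ∀ f : Fin k → Fin k ⊕ Fin r, Function.Injective f →
      g ∣ ((xIminusAC A C).submatrix f id).det)
    (B : Matrix (Fin k) (Fin r) F) (D : Matrix (Fin r) (Fin r) F) :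
    g ∣ (fromBlocks A B C D).charpoly := by
  have minors (f : Fin k → Fin k ⊕ Fin r) (hf : Function.Injective f) :
      g ∣ (((fromBlocks A B C D).charmatrix.submatrix id finSumFinEquiv.symm).submatrix f
        (Fin.castAdd r)).det := by
    convert hg f hf using 2
    ext1 i j
    rcases hfi : f i with l | l <;> simp [hfi, xIminusAC_eq_fromRows, charmatrix_fromBlocks]
  have := dvd_minors_add_of_dvd_minors _ minors finSumFinEquiv.symm.injective
  rwa [submatrix_submatrix, Function.id_comp, Function.comp_id, det_submatrix_equiv_self] at this

theorem unimodular_of_irreducible_charpoly_fromBlocks (hr : 0 < r)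
    {B : Matrix (Fin k) (Fin r) F} {D : Matrix (Fin r) (Fin r) F}
    (h : Irreducible (fromBlocks A B C D).charpoly) : (xIminusAC A C).Unimodular := by
  intro g hg
  have dvd_charpoly_A : g ∣ A.charpoly := by
    have := hg Sum.inl Sum.inl_injective
    rw [xIminusAC_eq_fromRows] at this
    exact this
  have dvd_charpoly := dvd_charpoly_fromBlocks_of_dvd_minors hg B D
  refine (h.dvd_iff.mp dvd_charpoly).resolve_right fun hassoc => ?_
  have := natDegree_le_of_dvd (hassoc.dvd.trans dvd_charpoly_A) A.charpoly_monic.ne_zero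
  simp only [charpoly_natDegree_eq_dim, Fintype.card_sum, Fintype.card_fin] at this
  omega

lemma exists_xIminusAC_mulVec_eq_charpoly_smul {L : Type*} [CommRing L] [Algebra F L] {α : L}
    (hα : k < (minpoly F α).natDegree) {v : Fin k → L} {c : Fin k ⊕ Fin r → F}
    (h : (xIminusAC A C).map (aeval α) *ᵥ v = algebraMap F L ∘ c) :
    ∃ s : Fin k → F[X], (∀ j, (s j).degree < k) ∧
      xIminusAC A C *ᵥ s = A.charpoly • (Polynomial.C ∘ c) := by
  rw [xIminusAC_eq_fromRows, fromRows_map, fromRows_mulVec] at h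
  have top : A.charmatrix.map (aeval α) *ᵥ v = algebraMap F L ∘ (c ∘ Sum.inl) :=
    funext fun i => congrFun h (Sum.inl i)
  have bottom (i : Fin r) : (((-C).map Polynomial.C).map (aeval α) *ᵥ v) i =
    algebraMap F L (c (Sum.inr i)) := congrFun h (Sum.inr i)
  obtain ⟨s, s_top, s_eval⟩ := exists_charmatrix_mulVec_eq_charpoly_smul A top
  have degree_charpoly_mul_C_le (a : F) : (A.charpoly * Polynomial.C a).degree ≤ k := by
    rw [mul_comm, C_mul']
    refine (degree_smul_le _ _).trans ?_
    rw [charpoly_degree_eq_dim, Fintype.card_fin]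
  have degree_lt (j : Fin k) : (s j).degree < k :=
    degree_lt_of_degree_charmatrix_mulVec_le A
      (fun i => by rw [s_top]; exact degree_charpoly_mul_C_le _) j
  refine ⟨s, degree_lt, ?_⟩
  rw [xIminusAC_eq_fromRows, fromRows_mulVec]
  ext1 (i | i)
  · exact congrFun s_top i
  · refine sub_eq_zero.mp (eq_zero_of_aeval_eq_zero_of_degree_le hα ?_ ?_)
    · calc aeval α ((((-C).map Polynomial.C) *ᵥ s) i - A.charpoly * Polynomial.C (c (Sum.inr i)))
          = (((-C).map Polynomial.C).map (aeval α) *ᵥ (aeval α ∘ s)) i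
              - aeval α A.charpoly * algebraMap F L (c (Sum.inr i)) := by
            rw [map_sub, map_mul, aeval_C]
            exact congrArg (· - _)
              ((aeval α : F[X] →ₐ[F] L).toRingHom.map_mulVec ((-C).map Polynomial.C) s i)
        _ = 0 := by
            rw [s_eval, mulVec_smul, Pi.smul_apply, bottom, smul_eq_mul, sub_self]
    · exact (degree_sub_le _ _).trans (max_le
        (degree_map_C_mulVec_le _ (fun j => (degree_lt j).le) i) (degree_charpoly_mul_C_le _))

lemma eq_zero_of_unimodular_of_mulVec_eq {L : Type*} [CommRing L] [Algebra F L] {α : L}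
    (hM : (xIminusAC A C).Unimodular) (hα : k < (minpoly F α).natDegree)
    {v : Fin k → L} {c : Fin k ⊕ Fin r → F}
    (h : (xIminusAC A C).map (aeval α) *ᵥ v = algebraMap F L ∘ c) : c = 0 := by
  obtain ⟨s, degree_lt, hs⟩ := exists_xIminusAC_mulVec_eq_charpoly_smul hα h
  have charpoly_dvd (j : Fin k) : A.charpoly ∣ s j :=
    dvd_of_unimodular_of_dvd_mulVec hM (fun i => by rw [hs]; exact dvd_mul_right _ _) j
  have s_eq_zero : s = 0 := funext fun j => eq_zero_of_dvd_of_degree_lt (charpoly_dvd j) <| by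
    simpa only [charpoly_degree_eq_dim, Fintype.card_fin] using degree_lt j
  rw [s_eq_zero, mulVec_zero, eq_comm, smul_eq_zero_iff_right A.charpoly_monic.ne_zero] at hs
  exact funext fun i => C_eq_zero.mp (congrFun hs i)

lemma vecMul_map_aeval_xIminusAC {L : Type*} [CommRing L] [Algebra F L] (α : L)
    (z : Fin k ⊕ Fin r → L) (j : Fin k) :
    (z ᵥ* (xIminusAC A C).map (aeval α)) j =
      α * z (Sum.inl j) - ∑ i, fromRows A C i j • z i := by
  have aeval_apply (i : Fin k ⊕ Fin r) : aeval α (xIminusAC A C i j) =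
      (if i = Sum.inl j then α else 0) - algebraMap F L (fromRows A C i j) := by
    rcases i with i | i <;> simp [xIminusAC, apply_ite]
  simp only [vecMul, dotProduct, map_apply, aeval_apply, mul_sub, mul_ite, mul_zero,
    Finset.sum_sub_distrib, Finset.sum_ite_eq', Finset.mem_univ, if_true, Algebra.smul_def,
    mul_comm]

lemma exists_fromBlocks_eq_leftMulMatrix {L : Type*} [CommRing L] [Algebra F L] {α : L}
    (b : Module.Basis (Fin k ⊕ Fin r) F L) (hb : b ᵥ* (xIminusAC A C).map (aeval α) = 0) :
    ∃ B D, fromBlocks A B C D = Algebra.leftMulMatrix b α := by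
  have mul_basis (j : Fin k) : α * b (Sum.inl j) = ∑ i, fromRows A C i j • b i :=
    sub_eq_zero.mp ((vecMul_map_aeval_xIminusAC α b j).symm.trans (congrFun hb j))
  have left_columns (i : Fin k ⊕ Fin r) (j : Fin k) :
      Algebra.leftMulMatrix b α i (Sum.inl j) = fromRows A C i j := by
    rw [Algebra.leftMulMatrix_eq_repr_mul, mul_basis, b.repr_sum_self]
  refine ⟨(Algebra.leftMulMatrix b α).toBlocks₁₂, (Algebra.leftMulMatrix b α).toBlocks₂₂, ?_⟩
  conv_rhs => rw [← fromBlocks_toBlocks (Algebra.leftMulMatrix b α)]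
  congr 1
  · ext i j
    exact (left_columns (Sum.inl i) j).symm
  · ext i j
    exact (left_columns (Sum.inr i) j).symm

theorem exists_charpoly_fromBlocks_eq_minpoly {L : Type*} [Finite F] [Field L] [Algebra F L]
    (hr : 0 < r) (hM : (xIminusAC A C).Unimodular) (pb : PowerBasis F L) (hdim : pb.dim = k + r) :
    ∃ B D, (fromBlocks A B C D).charpoly = minpoly F pb.gen := by
  have : Module.Finite F L := pb.finite
  have card_basis : Fintype.card (Fin k ⊕ Fin r) = Module.finrank F L := by
    rw [pb.finrank, hdim, Fintype.card_sum, Fintype.card_fin, Fintype.card_fin]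
  have card_le : Nat.card (Fin k ⊕ Fin r → F) ≤ Nat.card L := by
    rw [Module.natCard_eq_pow_finrank (K := F) (V := L), ← card_basis, Nat.card_fun,
      Nat.card_eq_fintype_card (α := Fin k ⊕ Fin r)]
  obtain ⟨z, hz, z_linearIndependent⟩ := exists_mem_linearIndependent_of_card_le card_le
    ((xIminusAC A C).map (aeval pb.gen)).vecMulLinear.ker fun c hc =>
      exists_vecMul_eq_zero_dotProduct_ne_zero fun v hv =>
        hc (eq_zero_of_unimodular_of_mulVec_eq hM (by rw [pb.natDegree_minpoly]; omega) hv)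
  let b := basisOfLinearIndependentOfCardEqFinrank' z z_linearIndependent card_basis
  obtain ⟨B, D, hBD⟩ := exists_fromBlocks_eq_leftMulMatrix (A := A) (C := C) (α := pb.gen) b
    (by rwa [coe_basisOfLinearIndependentOfCardEqFinrank'])
  exact ⟨B, D, by rw [hBD, charpoly_leftMulMatrix_eq_minpoly b pb]⟩

end Pencil

theorem irreducible_charpoly_completion_iff_unimodular
    {F : Type*} [Field F] [Fintype F] (n k : ℕ) (hk : 1 ≤ k) (hkn : k < n)
    (A : Matrix (Fin k) (Fin k) F) (C : Matrix (Fin (n - k)) (Fin k) F) :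
    (∃ (B : Matrix (Fin k) (Fin (n - k)) F) (D : Matrix (Fin (n - k)) (Fin (n - k)) F),
        Irreducible (Matrix.fromBlocks A B C D).charpoly) ↔
      (xIminusAC A C).Unimodular := by
  refine ⟨fun ⟨B, D, h⟩ => unimodular_of_irreducible_charpoly_fromBlocks (by omega) h, fun hM => ?_⟩
  obtain ⟨p, hp⟩ := CharP.exists F
  have : Fact p.Prime := ⟨CharP.char_is_prime F p⟩
  have : NeZero n := ⟨by omega⟩
  let pb := Field.powerBasisOfFiniteOfSeparable F (FiniteField.Extension F p n)
  have dim_eq : pb.dim = k + (n - k) := by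
    rw [← pb.finrank, FiniteField.finrank_extension]
    omega
  obtain ⟨B, D, hBD⟩ := exists_charpoly_fromBlocks_eq_minpoly (by omega) hM pb dim_eq
  exact ⟨B, D, hBD ▸ minpoly.irreducible pb.isIntegral_gen⟩
end

section
/- (Wimmer) Let F be an arbitrary field, 1 ≤ k < n, A ∈ M_k(F), C ∈ M_{n−k,k}(F), and let f ∈ F[x] be a monic polynomial of degree n. There exist B ∈ M_{k,n−k}(F) and D ∈ M_{n−k}(F) such that the block matrix [A B; C D] has characteristic polynomial f if and only if every polynomial g ∈ F[x] that divides the determinant of every k × k submatrix of the n × k polynomial matrix [xI_k − A; −C] also divides f. -/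
/-!
For necessity, expand the determinant of `xI - [A B; C D]` along its last `n - k` columns: it is a
combination of the `k × k` minors of its first `k` columns, which form the pencil `[xI - A; -C]`.

For sufficiency, pass to transposes. Filling in the blocks `B` and `D` amounts to changing an
operator `T₀` on `W = F ^ n` by an operator with values in the space `K` of vectors supported on
the last `n - k` coordinates. By Heymann's lemma, such a change makes `K` part of the Krylov
subspace `L` of some `b ∈ K`, and single-input pole placement then prescribes the characteristic
polynomial on `L` arbitrarily. Since `K ≤ L`, the operator induced on `W ⧸ L` is not affected by
any of this. Its characteristic polynomial divides every `k × k` minor of the pencil: the dual of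
`W ⧸ L` is an `A`-invariant subspace of `ker C`, and if `Y` is the matrix of `A` on the image of
`s`, then `[xI - A; -C] s = [s; 0] (xI - Y)`. So it divides `f`, and the cofactor is the polynomial
to be placed on `L`.
-/

section

open Polynomial
open scoped Matrix

section Invariant

variable {R M : Type*} [CommRing R] [AddCommGroup M] [Module R M] {T : Module.End R M}
  {N : Submodule R M}

theorem coe_aeval_restrict_apply (hN : N ≤ N.comap T) (p : R[X]) (x : N) :
    (aeval (T.restrict hN) p x : M) = aeval T p (x : M) := by
  induction p using Polynomial.induction_on' generalizing x with
  | add p q hp hq => simp only [map_add, LinearMap.add_apply, Submodule.coe_add, hp, hq]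
  | monomial i a =>
    simp only [aeval_monomial, Module.End.mul_apply, Module.algebraMap_end_apply,
      Submodule.coe_smul, Module.End.pow_restrict i hN, LinearMap.restrict_apply]

theorem charpoly_eq_charpoly_restrict_mul_charpoly_mapQ [Module.Finite R M] [Module.Free R M]
    [Module.Finite R N] [Module.Free R N] [Module.Free R (M ⧸ N)] (hN : N ≤ N.comap T) :
    T.charpoly = (T.restrict hN).charpoly * (N.mapQ N T hN).charpoly := by
  let bN := Module.Free.chooseBasis R N
  let bQ := Module.Free.chooseBasis R (M ⧸ N)
  let b := bN.sumQuot bQ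
  have restrict_block : (LinearMap.toMatrix b b T).toBlocks₁₁ =
      LinearMap.toMatrix bN bN (T.restrict hN) := by
    ext i j
    simp [b, Matrix.toBlocks₁₁, LinearMap.toMatrix_apply,
      Module.Basis.sumQuot_repr_inl_of_mem bN bQ _ (hN (bN j).2), LinearMap.restrict_apply]
  have zero_block : (LinearMap.toMatrix b b T).toBlocks₂₁ = 0 := by
    ext i j
    have : (Submodule.Quotient.mk (T (bN j)) : M ⧸ N) = 0 :=
      (Submodule.Quotient.mk_eq_zero N).2 (hN (bN j).2)
    simp [b, Matrix.toBlocks₂₁, LinearMap.toMatrix_apply, this]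
  have quotient_block : (LinearMap.toMatrix b b T).toBlocks₂₂ =
      LinearMap.toMatrix bQ bQ (N.mapQ N T hN) := by
    ext i j
    rw [Matrix.toBlocks₂₂, Matrix.of_apply, LinearMap.toMatrix_apply, LinearMap.toMatrix_apply,
      Module.Basis.sumQuot_repr_inr, ← Module.Basis.sumQuot_inr bN bQ j, Submodule.mapQ_apply]
    rfl
  rw [← T.charpoly_toMatrix b, ← Matrix.fromBlocks_toBlocks (LinearMap.toMatrix b b T),
    zero_block, Matrix.charpoly_fromBlocks_zero₂₁, restrict_block, quotient_block,
    LinearMap.charpoly_toMatrix, LinearMap.charpoly_toMatrix]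

end Invariant

section Division

variable {R : Type*} [CommRing R] {c : R[X]}

theorem X_mul_divByMonic (hc : c.Monic) (p : R[X]) :
    (X * p) /ₘ c = X * (p /ₘ c) + C ((X * (p %ₘ c)).coeff c.natDegree) := by
  nontriviality R
  set r := X * (p %ₘ c)
  refine (div_modByMonic_unique _ (r - C (r.coeff c.natDegree) * c) hc ⟨?_, ?_⟩).1
  · linear_combination (X : R[X]) * modByMonic_add_div p c
  · rw [degree_eq_natDegree hc.ne_zero, degree_lt_iff_coeff_zero]
    intro i hi
    rcases hi.eq_or_lt with rfl | hi
    · simp [hc.coeff_natDegree]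
    · obtain ⟨j, rfl⟩ := Nat.exists_eq_add_one_of_ne_zero (Nat.ne_zero_of_lt hi)
      rw [coeff_sub, coeff_C_mul, coeff_eq_zero_of_natDegree_lt hi, coeff_X_mul,
        coeff_eq_zero_of_degree_lt, mul_zero, sub_zero]
      refine (degree_modByMonic_lt p hc).trans_le (degree_le_natDegree.trans ?_)
      exact Nat.cast_le.2 (Nat.le_of_lt_succ hi)

theorem add_C_mul_divByMonic {h : R[X]} (hc : c.Monic) (hh : h.Monic)
    (hdeg : h.natDegree = c.natDegree) (p : R[X]) (a : R) :
    ((p + C a) * h) /ₘ c = (p * h) /ₘ c + C a := by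
  nontriviality R
  refine (div_modByMonic_unique _ ((p * h) %ₘ c + C a * (h - c)) hc ⟨?_, ?_⟩).1
  · linear_combination modByMonic_add_div (p * h) c
  · have degree_sub : (h - c).degree < c.degree := by
      have degree_eq : h.degree = c.degree := by
        rw [degree_eq_natDegree hh.ne_zero, degree_eq_natDegree hc.ne_zero,
          hdeg]
      exact degree_eq ▸ degree_sub_lt_left degree_eq hh.ne_zero (by rw [hh, hc])
    refine (degree_add_le _ _).trans_lt (max_lt (degree_modByMonic_lt _ hc) ?_)
    rw [← smul_eq_C_mul]
    exact (degree_smul_le a _).trans_lt degree_sub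

end Division

section Krylov

variable {R M : Type*} [CommRing R] [AddCommGroup M] [Module R M]

/-- Evaluation of polynomials at the operator `T`, applied to the vector `b`. -/
noncomputable def krylovMap (T : Module.End R M) (b : M) : R[X] →ₗ[R] M :=
  LinearMap.applyₗ b ∘ₗ (aeval T).toLinearMap

theorem krylovMap_apply (T : Module.End R M) (b : M) (p : R[X]) :
    krylovMap T b p = aeval T p b :=
  rfl

/-- The Krylov subspace (reachable subspace of a single-input linear system): the span of
`b, T b, T ^ 2 b, …`. -/
noncomputable def krylov (T : Module.End R M) (b : M) : Submodule R M :=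
  LinearMap.range (krylovMap T b)

theorem mem_krylov_self (T : Module.End R M) (b : M) : b ∈ krylov T b :=
  ⟨1, by simp [krylovMap]⟩

theorem krylov_le_comap (T : Module.End R M) (b : M) : krylov T b ≤ (krylov T b).comap T := by
  rintro _ ⟨p, rfl⟩
  exact ⟨X * p, by simp [krylovMap]⟩

theorem krylov_le {T : Module.End R M} {b : M} {N : Submodule R M} (hN : N ≤ N.comap T)
    (hb : b ∈ N) :
    krylov T b ≤ N := by
  rintro _ ⟨p, rfl⟩
  rw [krylovMap_apply, ← coe_aeval_restrict_apply hN p ⟨b, hb⟩]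
  exact Submodule.coe_mem _

theorem krylov_add_smulRight (T : Module.End R M) (b : M) (φ : Module.Dual R M) :
    krylov (T + φ.smulRight b) b = krylov T b := by
  apply le_antisymm
  · refine krylov_le (fun x hx => ?_) (mem_krylov_self T b)
    exact (krylov T b).add_mem (krylov_le_comap T b hx)
      ((krylov T b).smul_mem (φ x) (mem_krylov_self T b))
  · refine krylov_le (fun x hx => ?_) (mem_krylov_self _ b)
    have := (krylov (T + φ.smulRight b) b).sub_mem (krylov_le_comap _ b hx)
      ((krylov (T + φ.smulRight b) b).smul_mem (φ x) (mem_krylov_self _ b))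
    simpa using this

end Krylov

section KrylovField

variable {F W : Type*} [Field F] [AddCommGroup W] [Module F W]

theorem finrank_krylov_le_natDegree {T : Module.End F W} {b : W} {p : F[X]} (hp : p ≠ 0)
    (hpb : aeval T p b = 0) :
    Module.finrank F (krylov T b) ≤ p.natDegree := by
  have : Module.Finite F (degreeLT F p.natDegree) :=
    Module.Finite.equiv (degreeLTEquiv F p.natDegree).symm
  have krylov_le_map : krylov T b ≤ (degreeLT F p.natDegree).map (krylovMap T b) := by
    rintro _ ⟨q, rfl⟩
    refine ⟨q % p, mem_degreeLT.2 ?_, ?_⟩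
    · rw [← degree_eq_natDegree hp]
      exact EuclideanDomain.mod_lt q hp
    · conv_rhs => rw [← EuclideanDomain.mod_add_div q p, mul_comm]
      simp [krylovMap_apply, hpb]
  calc Module.finrank F (krylov T b)
      ≤ Module.finrank F ((degreeLT F p.natDegree).map (krylovMap T b)) :=
        Submodule.finrank_mono krylov_le_map
    _ ≤ Module.finrank F (degreeLT F p.natDegree) := Submodule.finrank_map_le _ _
    _ = p.natDegree := by rw [(degreeLTEquiv F p.natDegree).finrank_eq, Module.finrank_fin_fun]

theorem eq_zero_of_degree_lt_finrank_krylov {T : Module.End F W} {b : W} {p : F[X]}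
    (hdeg : p.degree < Module.finrank F (krylov T b)) (hpb : aeval T p b = 0) : p = 0 := by
  by_contra hp
  rw [degree_eq_natDegree hp, Nat.cast_lt] at hdeg
  exact hdeg.not_ge (finrank_krylov_le_natDegree hp hpb)

variable [Module.Finite F W]

/-- The characteristic polynomial of `T` on the Krylov subspace of `b`. As `b` is a cyclic vector
there, this is also the minimal polynomial of `b` under `T`. -/
noncomputable def krylovCharpoly (T : Module.End F W) (b : W) : F[X] :=
  (T.restrict (krylov_le_comap T b)).charpoly

theorem monic_krylovCharpoly (T : Module.End F W) (b : W) : (krylovCharpoly T b).Monic :=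
  LinearMap.charpoly_monic _

theorem natDegree_krylovCharpoly (T : Module.End F W) (b : W) :
    (krylovCharpoly T b).natDegree = Module.finrank F (krylov T b) :=
  LinearMap.charpoly_natDegree _

theorem degree_krylovCharpoly (T : Module.End F W) (b : W) :
    (krylovCharpoly T b).degree = Module.finrank F (krylov T b) := by
  rw [degree_eq_natDegree (monic_krylovCharpoly T b).ne_zero, natDegree_krylovCharpoly]

theorem aeval_krylovCharpoly_apply (T : Module.End F W) (b : W) :
    aeval T (krylovCharpoly T b) b = 0 := by
  rw [krylovCharpoly, ← coe_aeval_restrict_apply (krylov_le_comap T b) _ ⟨b, mem_krylov_self T b⟩,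
    LinearMap.aeval_self_charpoly, LinearMap.zero_apply, Submodule.coe_zero]

theorem krylovCharpoly_dvd_iff {T : Module.End F W} {b : W} {p : F[X]} :
    krylovCharpoly T b ∣ p ↔ aeval T p b = 0 := by
  have monic := monic_krylovCharpoly T b
  constructor
  · rintro ⟨q, rfl⟩
    rw [mul_comm, map_mul, Module.End.mul_apply, aeval_krylovCharpoly_apply, map_zero]
  · intro hpb
    rw [← modByMonic_eq_zero_iff_dvd monic]
    apply eq_zero_of_degree_lt_finrank_krylov (T := T) (b := b)
    · rw [← degree_krylovCharpoly]
      exact degree_modByMonic_lt p monic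
    · rw [modByMonic_eq_sub_mul_div, mul_comm]
      simp [hpb, aeval_krylovCharpoly_apply]

theorem krylovCharpoly_eq {T : Module.End F W} {b : W} {h : F[X]} (hh : h.Monic)
    (hdeg : h.natDegree = Module.finrank F (krylov T b)) (hb : aeval T h b = 0) :
    krylovCharpoly T b = h :=
  (eq_of_monic_of_dvd_of_natDegree_le (monic_krylovCharpoly T b) hh (krylovCharpoly_dvd_iff.2 hb)
    (by rw [hdeg, natDegree_krylovCharpoly])).symm

theorem exists_dual_apply_aeval_eq (T : Module.End F W) (b : W) (μ : Module.Dual F F[X])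
    (hμ : ∀ p, krylovCharpoly T b ∣ p → μ p = 0) :
    ∃ φ : Module.Dual F W, ∀ p, φ (aeval T p b) = μ p := by
  have : μ ∈ LinearMap.range (krylovMap T b).dualMap := by
    rw [LinearMap.range_dualMap_eq_dualAnnihilator_ker, Submodule.mem_dualAnnihilator]
    exact fun p hp => hμ p (krylovCharpoly_dvd_iff.2 hp)
  obtain ⟨φ, rfl⟩ := this
  exact ⟨φ, fun p => rfl⟩

theorem exists_krylovCharpoly_add_smulRight_eq (T : Module.End F W) (b : W) {h : F[X]}
    (hh : h.Monic) (hdeg : h.natDegree = Module.finrank F (krylov T b)) :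
    ∃ φ : Module.Dual F W, krylovCharpoly (T + φ.smulRight b) b = h := by
  set c := krylovCharpoly T b with hc
  have monic_c : c.Monic := monic_krylovCharpoly T b
  have natDegree_eq : h.natDegree = c.natDegree := by rw [hdeg, hc, natDegree_krylovCharpoly]
  -- `φ` reads off the carry in `X_mul_divByMonic`, so that the quotient `(p * h) /ₘ c`, evaluated
  -- along the modified operator, reproduces `p` along `T`; `p = c` then gives `h`.
  let μ : Module.Dual F F[X] :=
    -(lcoeff F c.natDegree ∘ₗ LinearMap.mulLeft F X ∘ₗ modByMonicHom c ∘ₗ LinearMap.mulRight F h)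
  have μ_apply (p : F[X]) : μ p = -(X * ((p * h) %ₘ c)).coeff c.natDegree := rfl
  obtain ⟨φ, hφ⟩ := exists_dual_apply_aeval_eq T b μ fun p hp => by
    simp [μ_apply, (modByMonic_eq_zero_iff_dvd monic_c).2 (hp.mul_right h)]
  have aeval_divByMonic (p : F[X]) :
      aeval (T + φ.smulRight b) ((p * h) /ₘ c) b = aeval T p b := by
    induction p using Polynomial.recOnHorner with
    | M0 => simp
    | MC p a _ _ ih =>
      rw [add_C_mul_divByMonic monic_c hh natDegree_eq]
      simp [ih]
    | MX p _ ih =>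
      rw [mul_comm p, mul_assoc, X_mul_divByMonic monic_c]
      simp [ih, hφ, μ_apply]
  refine ⟨φ, krylovCharpoly_eq hh (by rw [krylov_add_smulRight, hdeg]) ?_⟩
  have := aeval_divByMonic c
  rwa [mul_divByMonic_cancel_left _ monic_c, hc, aeval_krylovCharpoly_apply] at this

theorem exists_charpoly_add_smulRight_eq (T : Module.End F W) (b : W) {h : F[X]}
    (hh : h.Monic) (hdeg : h.natDegree = Module.finrank F (krylov T b)) :
    ∃ φ : Module.Dual F W, (T + φ.smulRight b).charpoly =
      h * ((krylov T b).mapQ _ T (krylov_le_comap T b)).charpoly := by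
  obtain ⟨φ, hφ⟩ := exists_krylovCharpoly_add_smulRight_eq T b hh hdeg
  refine ⟨φ, ?_⟩
  set T' := T + φ.smulRight b
  have krylov_eq : krylov T' b = krylov T b := krylov_add_smulRight T b φ
  have hT' : krylov T b ≤ (krylov T b).comap T' := krylov_eq ▸ krylov_le_comap T' b
  have charpoly_restrict (L : Submodule F W) (hL : L ≤ L.comap T') (h_eq : krylov T' b = L) :
      (T'.restrict hL).charpoly = krylovCharpoly T' b := by
    subst h_eq
    rfl
  have mapQ_eq : (krylov T b).mapQ _ T' hT' = (krylov T b).mapQ _ T (krylov_le_comap T b) := by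
    ext w
    refine (Submodule.Quotient.eq _).2 ?_
    simpa [T'] using (krylov T b).smul_mem (φ w) (mem_krylov_self T b)
  rw [charpoly_eq_charpoly_restrict_mul_charpoly_mapQ hT', charpoly_restrict _ hT' krylov_eq, hφ,
    mapQ_eq]

theorem exists_aeval_add_smulRight_apply (T : Module.End F W) {b : W} (hb : b ≠ 0) (v : W) :
    ∃ φ : Module.Dual F W, ∀ p : F[X], p.natDegree ≤ Module.finrank F (krylov T b) →
      aeval (T + φ.smulRight v) p b =
        aeval T p b + p.coeff (Module.finrank F (krylov T b)) • v := by
  set c := krylovCharpoly T b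
  set m := Module.finrank F (krylov T b) with hm
  have monic_c : c.Monic := monic_krylovCharpoly T b
  -- `φ` vanishes on `T ^ i b` for `i < m - 1` and is `1` on `T ^ (m - 1) b`.
  obtain ⟨φ, hφ⟩ := exists_dual_apply_aeval_eq T b
    (lcoeff F m ∘ₗ LinearMap.mulLeft F X ∘ₗ modByMonicHom c) fun p hp => by
      simp [(modByMonic_eq_zero_iff_dvd monic_c).2 hp]
  have φ_pow_apply (i : ℕ) (hi : i < m) : φ ((T ^ i) b) = (X ^ (i + 1) : F[X]).coeff m := by
    have degree_lt : (X ^ i : F[X]).degree < c.degree := by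
      rw [degree_X_pow, degree_krylovCharpoly]
      exact_mod_cast hi
    simpa [modByMonicHom, (modByMonic_eq_self_iff monic_c).2 degree_lt, pow_succ'] using hφ (X ^ i)
  have m_ne_zero : m ≠ 0 := by
    rw [hm, Ne, Submodule.finrank_eq_zero]
    exact (krylov T b).ne_bot_iff.2 ⟨b, mem_krylov_self T b, hb⟩
  have pow_apply (i : ℕ) (hi : i ≤ m) :
      ((T + φ.smulRight v) ^ i) b = (T ^ i) b + (X ^ i : F[X]).coeff m • v := by
    induction i with
    | zero => simp [coeff_one, m_ne_zero]
    | succ i ih =>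
      rw [pow_succ', Module.End.mul_apply, ih (by omega), coeff_X_pow, if_neg (by omega),
        zero_smul, add_zero, LinearMap.add_apply, LinearMap.smulRight_apply, φ_pow_apply i hi,
        ← Module.End.mul_apply, ← pow_succ']
  refine ⟨φ, fun p hp => ?_⟩
  refine induction_with_natDegree_le
    (fun p => aeval (T + φ.smulRight v) p b = aeval T p b + p.coeff m • v) m (by simp)
    (fun i a _ hi => ?_) (fun p q _ _ hp hq => ?_) p hp
  · simp [pow_apply i hi, coeff_X_pow]
  · simp only [map_add, LinearMap.add_apply, hp, hq, coeff_add, add_smul]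
    abel

theorem exists_finrank_krylov_lt (T : Module.End F W) {b v : W} (hb : b ≠ 0)
    (hv : v ∉ krylov T b) :
    ∃ φ : Module.Dual F W,
      Module.finrank F (krylov T b) < Module.finrank F (krylov (T + φ.smulRight v) b) := by
  obtain ⟨φ, hφ⟩ := exists_aeval_add_smulRight_apply T hb v
  refine ⟨φ, ?_⟩
  by_contra! hle
  set m := Module.finrank F (krylov T b)
  set c := krylovCharpoly (T + φ.smulRight v) b
  have natDegree_le : c.natDegree ≤ m := (natDegree_krylovCharpoly _ b).trans_le hle
  have sum_eq_zero : aeval T c b + c.coeff m • v = 0 := by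
    rw [← hφ c natDegree_le, aeval_krylovCharpoly_apply]
  have coeff_eq_zero : c.coeff m = 0 := by
    by_contra hne
    refine hv ((Submodule.smul_mem_iff _ hne).1 ?_)
    rw [← neg_eq_of_add_eq_zero_right sum_eq_zero]
    exact (krylov T b).neg_mem ⟨c, rfl⟩
  have degree_lt : c.degree < m := by
    refine (degree_lt_iff_coeff_zero c m).2 fun i hi => ?_
    rcases hi.eq_or_lt with rfl | hi
    · exact coeff_eq_zero
    · exact coeff_eq_zero_of_natDegree_lt (natDegree_le.trans_lt hi)
  have aeval_eq_zero : aeval T c b = 0 := by simpa [coeff_eq_zero] using sum_eq_zero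
  exact (monic_krylovCharpoly _ b).ne_zero
    (eq_zero_of_degree_lt_finrank_krylov degree_lt aeval_eq_zero)

theorem exists_le_krylov (T₀ : Module.End F W) (K : Submodule F W) {b : W} (hb : b ≠ 0) :
    ∃ T : Module.End F W, (∀ w, T w - T₀ w ∈ K) ∧ K ≤ krylov T b := by
  induction codim : Module.finrank F W - Module.finrank F (krylov T₀ b)
    using Nat.strong_induction_on generalizing T₀ with
  | _ d ih =>
    by_cases hK : K ≤ krylov T₀ b
    · exact ⟨T₀, by simp, hK⟩
    obtain ⟨v, hvK, hv⟩ := SetLike.not_le_iff_exists.1 hK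
    obtain ⟨φ, hφ⟩ := exists_finrank_krylov_lt T₀ hb hv
    have := (krylov (T₀ + φ.smulRight v) b).finrank_le
    obtain ⟨T, hT, hTK⟩ := ih _ (by omega) (T₀ + φ.smulRight v) rfl
    refine ⟨T, fun w => ?_, hTK⟩
    convert add_mem (hT w) (K.smul_mem (φ w) hvK) using 1
    simp only [LinearMap.add_apply, LinearMap.smulRight_apply]
    abel

theorem exists_mem_le_krylov (T₀ : Module.End F W) (K : Submodule F W) :
    ∃ b ∈ K, ∃ T : Module.End F W, (∀ w, T w - T₀ w ∈ K) ∧ K ≤ krylov T b := by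
  by_cases hK : K = ⊥
  · exact ⟨0, K.zero_mem, T₀, by simp, by simp [hK]⟩
  · obtain ⟨b, hbK, hb⟩ := K.ne_bot_iff.1 hK
    exact ⟨b, hbK, exists_le_krylov T₀ K hb⟩

theorem exists_charpoly_eq_of_charpoly_mapQ_dvd (T₀ : Module.End F W) (K : Submodule F W) :
    ∃ (L : Submodule F W) (hL : L ≤ L.comap T₀), K ≤ L ∧
      ∀ f : F[X], f.Monic → f.natDegree = Module.finrank F W → (L.mapQ L T₀ hL).charpoly ∣ f →
        ∃ T : Module.End F W, (∀ w, T w - T₀ w ∈ K) ∧ T.charpoly = f := by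
  obtain ⟨b, hbK, T, hT, hK⟩ := exists_mem_le_krylov T₀ K
  have hL : krylov T b ≤ (krylov T b).comap T₀ := fun w hw => by
    have := (krylov T b).sub_mem (krylov_le_comap T b hw) (hK (hT w))
    rwa [sub_sub_cancel] at this
  refine ⟨krylov T b, hL, hK, ?_⟩
  have mapQ_eq : (krylov T b).mapQ _ T (krylov_le_comap T b) = (krylov T b).mapQ _ T₀ hL := by
    ext w
    exact (Submodule.Quotient.eq _).2 (hK (hT w))
  rintro _ hf hdeg ⟨h, rfl⟩
  have monic_quot := ((krylov T b).mapQ _ T₀ hL).charpoly_monic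
  have monic_h : h.Monic := monic_quot.of_mul_monic_left hf
  have natDegree_h : h.natDegree = Module.finrank F (krylov T b) := by
    rw [monic_quot.natDegree_mul monic_h, LinearMap.charpoly_natDegree,
      ← (krylov T b).finrank_quotient_add_finrank] at hdeg
    omega
  obtain ⟨φ, hφ⟩ := exists_charpoly_add_smulRight_eq T b monic_h natDegree_h
  refine ⟨T + φ.smulRight b, fun w => ?_, by rw [hφ, mapQ_eq, mul_comm]⟩
  convert add_mem (hT w) (K.smul_mem (φ w) hbK) using 1
  simp only [LinearMap.add_apply, LinearMap.smulRight_apply]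
  abel

end KrylovField

section Minors

variable {R : Type*} [CommRing R]

theorem dvd_det_of_forall_dvd_det_submatrix_castAdd {k r : ℕ} {g : R}
    {N : Matrix (Fin (k + r)) (Fin (k + r)) R}
    (h : ∀ e : Fin k → Fin (k + r), Function.Injective e →
      g ∣ (N.submatrix e (Fin.castAdd r)).det) :
    g ∣ N.det := by
  induction r with
  | zero => simpa using h id Function.injective_id
  | succ r ih =>
    rw [Matrix.det_succ_column (n := k + r) N (Fin.last _)]
    refine Finset.dvd_sum fun i _ => (ih fun e he => ?_).mul_left _
    have minor_eq : (N.submatrix i.succAbove (Fin.last (k + r)).succAbove).submatrix e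
        (Fin.castAdd r) = N.submatrix (i.succAbove ∘ e) (Fin.castAdd (r + 1)) := by
      rw [Fin.succAbove_last]
      rfl
    rw [minor_eq]
    exact h _ (Fin.succAbove_right_injective.comp he)

variable {m r ι : Type*} [Fintype m] [DecidableEq m] [Fintype ι] [DecidableEq ι]

theorem dvd_det_of_forall_dvd_det_submatrix_inl [Fintype r] [DecidableEq r] {g : R}
    {N : Matrix (m ⊕ r) (m ⊕ r) R}
    (h : ∀ e : m → m ⊕ r, Function.Injective e → g ∣ (N.submatrix e Sum.inl).det) :
    g ∣ N.det := by
  let em := Fintype.equivFin m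
  let σ : Fin (Fintype.card m + Fintype.card r) ≃ m ⊕ r :=
    finSumFinEquiv.symm.trans (em.symm.sumCongr (Fintype.equivFin r).symm)
  rw [← Matrix.det_submatrix_equiv_self σ]
  refine dvd_det_of_forall_dvd_det_submatrix_castAdd fun e he => ?_
  have minor_eq : (N.submatrix σ σ).submatrix e (Fin.castAdd _) =
      (N.submatrix (σ ∘ e ∘ em) Sum.inl).submatrix em.symm em.symm := by
    ext i j
    simp [σ]
  rw [minor_eq, Matrix.det_submatrix_equiv_self]
  exact h _ (σ.injective.comp (he.comp em.injective))

theorem det_dvd_det_of_mul_eq_mul {E : Matrix m m R} {s S : Matrix m ι R} {t : Matrix ι m R}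
    {Y : Matrix ι ι R} (hts : t * s = 1) (hEs : E * s = S * Y) : Y.det ∣ E.det := by
  have mul_s : (E - E * s * t + S * t) * s = S := by
    rw [Matrix.add_mul, Matrix.sub_mul, Matrix.mul_assoc (E * s), Matrix.mul_assoc S, hts,
      Matrix.mul_one, Matrix.mul_one, sub_self, zero_add]
  have factor : E = (E - E * s * t + S * t) * (1 + s * (Y - 1) * t) := by
    rw [Matrix.mul_add, Matrix.mul_one, ← Matrix.mul_assoc, ← Matrix.mul_assoc, mul_s,
      Matrix.mul_sub, Matrix.mul_one, Matrix.sub_mul, ← hEs]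
    abel
  have det_factor : (1 + s * (Y - 1) * t).det = Y.det := by
    rw [Matrix.mul_assoc, Matrix.det_one_add_mul_comm, Matrix.mul_assoc, hts, Matrix.mul_one,
      add_sub_cancel]
  rw [factor, Matrix.det_mul, det_factor]
  exact dvd_mul_left _ _

/-- The pencil `[xI - A; -C]` of the Popov–Belevitch–Hautus test for observability of the linear
system with state matrix `A` and output matrix `C`. -/
noncomputable def observabilityPencil (A : Matrix m m R) (C : Matrix r m R) :
    Matrix (m ⊕ r) m R[X] :=
  Matrix.fromRows A.charmatrix (-C.map Polynomial.C)

theorem dvd_charpoly_fromBlocks [Fintype r] [DecidableEq r] {A : Matrix m m R} {C : Matrix r m R}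
    {g : R[X]} (h : ∀ e : m → m ⊕ r, Function.Injective e →
      g ∣ ((observabilityPencil A C).submatrix e id).det)
    (B : Matrix m r R) (D : Matrix r r R) : g ∣ (Matrix.fromBlocks A B C D).charpoly := by
  refine dvd_det_of_forall_dvd_det_submatrix_inl fun e he => ?_
  have columns_eq : (Matrix.fromBlocks A B C D).charmatrix.submatrix e Sum.inl =
      (observabilityPencil A C).submatrix e id := by
    ext1 i j
    rw [Matrix.charmatrix_fromBlocks]
    cases row : e i <;> simp [observabilityPencil, row]
  rw [columns_eq]
  exact h e he

theorem observabilityPencil_mul {A : Matrix m m R} {C : Matrix r m R} {s : Matrix m ι R}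
    {Y : Matrix ι ι R} (hAs : A * s = s * Y) (hCs : C * s = 0) :
    observabilityPencil A C * s.map Polynomial.C =
      Matrix.fromRows (s.map Polynomial.C) 0 * Y.charmatrix := by
  have charmatrix_mul : A.charmatrix * s.map Polynomial.C = s.map Polynomial.C * Y.charmatrix := by
    rw [Matrix.charmatrix, Matrix.charmatrix, Matrix.sub_mul, Matrix.mul_sub,
      RingHom.mapMatrix_apply, RingHom.mapMatrix_apply, ← Matrix.map_mul, ← Matrix.map_mul, hAs,
      Matrix.scalar_comm X (Commute.all X)]
  rw [observabilityPencil, Matrix.fromRows_mul, Matrix.fromRows_mul, charmatrix_mul,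
    Matrix.neg_mul, ← Matrix.map_mul, hCs]
  simp

theorem charpoly_dvd_det_submatrix_observabilityPencil {A : Matrix m m R} {C : Matrix r m R}
    {s : Matrix m ι R} {t : Matrix ι m R} {Y : Matrix ι ι R} (hAs : A * s = s * Y)
    (hCs : C * s = 0) (hts : t * s = 1) (e : m → m ⊕ r) :
    Y.charpoly ∣ ((observabilityPencil A C).submatrix e id).det := by
  refine det_dvd_det_of_mul_eq_mul (s := s.map Polynomial.C) (t := t.map Polynomial.C)
    (S := (Matrix.fromRows (s.map Polynomial.C) (0 : Matrix r ι R[X])).submatrix e id) ?_ ?_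
  · rw [← Matrix.map_mul, hts]
    simp
  · exact congrArg (fun N => N.submatrix e id) (observabilityPencil_mul hAs hCs)

end Minors

section Completion

variable {F m r : Type*} [Field F] [Fintype m] [DecidableEq m] [Fintype r] [DecidableEq r]

theorem exists_matrix_mul_eq_mul_mapQ {n : Type*} [Fintype n] [DecidableEq n] (M : Matrix n n F)
    (L : Submodule F (n → F)) (hL : L ≤ L.comap Mᵀ.toLin') :
    ∃ (d : ℕ) (s : Matrix n (Fin d) F) (t : Matrix (Fin d) n F) (Y : Matrix (Fin d) (Fin d) F),
      M * s = s * Y ∧ t * s = 1 ∧ (∀ w ∈ L, w ᵥ* s = 0) ∧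
        Y.charpoly = (L.mapQ L Mᵀ.toLin' hL).charpoly := by
  let bW := Pi.basisFun F n
  let bQ := Module.finBasis F ((n → F) ⧸ L)
  obtain ⟨τ, hτ⟩ := L.mkQ.exists_rightInverse_of_surjective L.range_mkQ
  refine ⟨_, (LinearMap.toMatrix bW bQ L.mkQ)ᵀ, (LinearMap.toMatrix bQ bW τ)ᵀ,
    (LinearMap.toMatrix bQ bQ (L.mapQ L Mᵀ.toLin' hL))ᵀ, ?_, ?_, fun w hw => ?_, ?_⟩
  · have transpose_M : LinearMap.toMatrix bW bW Mᵀ.toLin' = Mᵀ := LinearMap.toMatrix'_toLin' Mᵀ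
    rw [← Matrix.transpose_mul, ← LinearMap.toMatrix_comp, Submodule.mapQ_mkQ,
      LinearMap.toMatrix_comp bW bW bQ, transpose_M, Matrix.transpose_mul,
      Matrix.transpose_transpose]
  · rw [← Matrix.transpose_mul, ← LinearMap.toMatrix_comp, hτ, LinearMap.toMatrix_id,
      Matrix.transpose_one]
  · have : L.mkQ w = 0 := (Submodule.Quotient.mk_eq_zero L).2 hw
    rw [Matrix.vecMul_transpose]
    have mulVec_repr := LinearMap.toMatrix_mulVec_repr bW bQ L.mkQ w
    rw [this, map_zero] at mulVec_repr
    exact mulVec_repr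
  · rw [Matrix.charpoly_transpose, LinearMap.charpoly_toMatrix]

theorem charpoly_mapQ_dvd_det_submatrix_observabilityPencil (A : Matrix m m F) (C : Matrix r m F)
    {L : Submodule F (m ⊕ r → F)} (hL : L ≤ L.comap (Matrix.fromBlocks A 0 C 0)ᵀ.toLin')
    (hK : LinearMap.ker (LinearMap.funLeft F F Sum.inl) ≤ L) (e : m → m ⊕ r) :
    (L.mapQ L (Matrix.fromBlocks A 0 C 0)ᵀ.toLin' hL).charpoly ∣
      ((observabilityPencil A C).submatrix e id).det := by
  obtain ⟨d, s, t, Y, intertwine, left_inverse, vecMul_eq_zero, charpoly_Y⟩ :=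
    exists_matrix_mul_eq_mul_mapQ _ L hL
  have toRows₂_eq_zero : s.toRows₂ = 0 := by
    ext i j
    have single_mem : Pi.single (Sum.inr i) 1 ∈ L := hK (by ext; simp [LinearMap.funLeft_apply])
    have := congrFun (vecMul_eq_zero _ single_mem) j
    rwa [Matrix.single_one_vecMul] at this
  have s_eq : s = Matrix.fromRows s.toRows₁ 0 := by
    rw [← toRows₂_eq_zero, Matrix.fromRows_toRows]
  have left_inverse_toRows₁ : t.toCols₁ * s.toRows₁ = 1 := by
    rwa [s_eq, ← Matrix.fromCols_toCols t, Matrix.fromCols_mul_fromRows, Matrix.mul_zero,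
      add_zero] at left_inverse
  obtain ⟨hAs, hCs⟩ : A * s.toRows₁ = s.toRows₁ * Y ∧ C * s.toRows₁ = 0 := by
    rw [s_eq, Matrix.fromBlocks_mul_fromRows, Matrix.fromRows_mul, Matrix.fromRows_ext_iff]
      at intertwine
    simpa using intertwine
  rw [← charpoly_Y]
  exact charpoly_dvd_det_submatrix_observabilityPencil hAs hCs left_inverse_toRows₁ e

theorem exists_charpoly_fromBlocks_eq (A : Matrix m m F) (C : Matrix r m F) {f : F[X]}
    (hf : f.Monic) (hdeg : f.natDegree = Fintype.card m + Fintype.card r)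
    (h : ∀ g : F[X], (∀ e : m → m ⊕ r, Function.Injective e →
      g ∣ ((observabilityPencil A C).submatrix e id).det) → g ∣ f) :
    ∃ (B : Matrix m r F) (D : Matrix r r F), (Matrix.fromBlocks A B C D).charpoly = f := by
  obtain ⟨L, hL, hK, exists_charpoly_eq⟩ := exists_charpoly_eq_of_charpoly_mapQ_dvd
    (Matrix.fromBlocks A 0 C 0)ᵀ.toLin' (LinearMap.ker (LinearMap.funLeft F F Sum.inl))
  obtain ⟨T, hT, rfl⟩ := exists_charpoly_eq f hf (by simp [hdeg])
    (h _ fun e _ => charpoly_mapQ_dvd_det_submatrix_observabilityPencil A C hL hK e)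
  let M := (LinearMap.toMatrix' T)ᵀ
  have M_inl (x : m ⊕ r) (j : m) : M x (Sum.inl j) = Matrix.fromRows A C x j := by
    have := congrFun (hT (Pi.single x 1)) j
    cases x <;>
      simpa [M, LinearMap.funLeft_apply, LinearMap.toMatrix'_apply, sub_eq_zero] using this
  have M_eq : Matrix.fromBlocks A M.toBlocks₁₂ C M.toBlocks₂₂ = M := by
    conv_rhs => rw [← Matrix.fromBlocks_toBlocks M]
    congr 1 <;> ext i j
    · exact (M_inl (Sum.inl i) j).symm
    · exact (M_inl (Sum.inr i) j).symm
  refine ⟨M.toBlocks₁₂, M.toBlocks₂₂, ?_⟩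
  rw [M_eq, Matrix.charpoly_transpose, ← Matrix.charpoly_toLin', Matrix.toLin'_toMatrix']

theorem wimmer_charpoly_completion_general (A : Matrix m m F) (C : Matrix r m F) {f : F[X]}
    (hf : f.Monic) (hdeg : f.natDegree = Fintype.card m + Fintype.card r) :
    (∃ (B : Matrix m r F) (D : Matrix r r F), (Matrix.fromBlocks A B C D).charpoly = f) ↔
      ∀ g : F[X],
        (∀ e : m → m ⊕ r, Function.Injective e →
          g ∣ ((observabilityPencil A C).submatrix e id).det) → g ∣ f := by
  refine ⟨?_, exists_charpoly_fromBlocks_eq A C hf hdeg⟩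
  rintro ⟨B, D, rfl⟩ g hg
  exact dvd_charpoly_fromBlocks hg B D

theorem xIminusAC_eq_observabilityPencil {k l : ℕ} (A : Matrix (Fin k) (Fin k) F)
    (C : Matrix (Fin l) (Fin k) F) : xIminusAC A C = observabilityPencil A C := by
  ext1 (i | i) j <;>
    simp [xIminusAC, observabilityPencil, Matrix.charmatrix_apply, Matrix.diagonal_apply]

end Completion

end

/-- Wimmer's theorem. -/
theorem wimmer_charpoly_completion {F : Type*} [Field F] (n k : ℕ) (hk : 1 ≤ k) (hkn : k < n)
    (A : Matrix (Fin k) (Fin k) F) (C : Matrix (Fin (n - k)) (Fin k) F)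
    (f : Polynomial F) (hf : f.Monic) (hdeg : f.natDegree = n) :
    (∃ (B : Matrix (Fin k) (Fin (n - k)) F) (D : Matrix (Fin (n - k)) (Fin (n - k)) F),
        (Matrix.fromBlocks A B C D).charpoly = f) ↔
      ∀ g : Polynomial F,
        (∀ e : Fin k → (Fin k ⊕ Fin (n - k)), Function.Injective e →
          g ∣ ((xIminusAC A C).submatrix e id).det) → g ∣ f := by
  rw [xIminusAC_eq_observabilityPencil]
  exact wimmer_charpoly_completion_general A C hf (by simp only [Fintype.card_fin]; omega)
end
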